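/- arXiv:1002.3241 — 6 statements merged into one kernel-verified Lean document; each statement's English description precedes it below -/
import Mathlib

section
/- Let p ≥ 1 and let X : [0,T] → ℝ be a differentiable path of bounded variation. Then the total p-variation of X on [0,T] equals the supremum, over all finite sets 0 = s_0 < s_1 < ⋯ < s_m = T whose interior points s_1,…,s_{m−1} are critical points of X (i.e. X′(s_i) = 0), of (∑_{i=0}^{m−1} |X(s_{i+1}) − X(s_i)|^p)^{1/p}. -/
/-!
The idea is to maximise the sum `∑ |X(t_{i+1}) - X(t_i)|^p` over all *weak* partitions
`0 = t_0 ≤ ⋯ ≤ t_n = T` with a fixed number `n` of steps. These form a compact set and the sum is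
continuous on it, so a maximiser `u` exists.

If at some interior index the three consecutive values of `X ∘ u` are monotone (in particular if
two consecutive points coincide), that point can be removed without decreasing the sum, because
`a^p + b^p ≤ (a+b)^p` for `a, b ≥ 0` (`powSum_le_remove`), and one concludes by induction on `n`.
Otherwise `u` is a strict partition and every interior value `X(u_j)` lies strictly above, or
strictly below, both of its neighbours. Then moving `u_j` to a point with a more extreme value of
`X` would strictly increase the sum, so `u_j` is a local extremum of `X` and hence critical
(`deriv_eq_zero_of_maximal`).
-/

open Set ENNReal

/-- The p-variation sum `(∑ |X(t_{i+1}) - X(t_i)|^p)^(1/p)` associated to a partition. -/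
noncomputable def pVarSum (p : ℝ) (X : ℝ → ℝ) (n : ℕ) (t : ℕ → ℝ) : ℝ :=
  (∑ i ∈ Finset.range n, |X (t (i + 1)) - X (t i)| ^ p) ^ (1 / p)

/-- `t 0 = 0 < t 1 < ⋯ < t n = T` is a finite partition of `[0, T]`. -/
def IsPartition (T : ℝ) (n : ℕ) (t : ℕ → ℝ) : Prop :=
  t 0 = 0 ∧ t n = T ∧ ∀ i < n, t i < t (i + 1)

/-- The total p-variation `D_p(X)_T` of `X` on `[0, T]`: the supremum of the p-variation sums
over all finite partitions of `[0, T]`. -/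
noncomputable def pVariation (p : ℝ) (X : ℝ → ℝ) (T : ℝ) : ℝ≥0∞ :=
  ⨆ (n : ℕ) (t : ℕ → ℝ) (_ : IsPartition T n t), ENNReal.ofReal (pVarSum p X n t)

/-- The sum of the `p`-th powers of the increments, i.e. `pVarSum` before taking the root. -/
noncomputable def powSum (p : ℝ) (X : ℝ → ℝ) (n : ℕ) (t : ℕ → ℝ) : ℝ :=
  ∑ i ∈ Finset.range n, |X (t (i + 1)) - X (t i)| ^ p

/-- Weak partitions `0 = t 0 ≤ ⋯ ≤ t n = T`. The whole sequence, including its irrelevant tail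
beyond `n`, is required to stay in `[0, T]`, so that these sequences form a compact subset of
the product space `ℕ → ℝ`. -/
def weakPartitions (T : ℝ) (n : ℕ) : Set (ℕ → ℝ) :=
  {t | t 0 = 0 ∧ t n = T ∧ (∀ i < n, t i ≤ t (i + 1)) ∧ ∀ i, t i ∈ Icc 0 T}

theorem isCompact_weakPartitions (T : ℝ) (n : ℕ) : IsCompact (weakPartitions T n) := by
  have hpi : IsCompact (Set.pi univ fun _ : ℕ => Icc (0 : ℝ) T) :=
    isCompact_univ_pi fun _ => isCompact_Icc
  refine hpi.of_isClosed_subset ?_ fun t ht i _ => ht.2.2.2 i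
  have hc : ∀ i : ℕ, Continuous fun t : ℕ → ℝ => t i := fun i => continuous_apply i
  simp only [weakPartitions, Set.ofPred_and, Set.ofPred_forall]
  refine (isClosed_eq (hc 0) continuous_const).inter
    ((isClosed_eq (hc n) continuous_const).inter (IsClosed.inter ?_ ?_))
  · exact isClosed_iInter fun i => isClosed_iInter fun _ => isClosed_le (hc i) (hc (i + 1))
  · exact isClosed_iInter fun i => isClosed_Icc.preimage (hc i)

theorem continuousOn_powSum {p T : ℝ} (hp : 1 ≤ p) {X : ℝ → ℝ}
    (hX : ContinuousOn X (Icc 0 T)) (n : ℕ) :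
    ContinuousOn (powSum p X n) (weakPartitions T n) := by
  have hc : ∀ i : ℕ, ContinuousOn (fun t : ℕ → ℝ => X (t i)) (weakPartitions T n) := fun i =>
    hX.comp (continuous_apply i).continuousOn fun t ht => ht.2.2.2 i
  refine continuousOn_finsetSum _ fun i _ => ?_
  exact ((hc (i + 1)).sub (hc i)).abs.rpow_const fun _ _ => Or.inr (by linarith)

theorem sum_range_split (g : ℕ → ℝ) (k r : ℕ) :
    ∑ i ∈ Finset.range (k + 2 + r), g i =
      ∑ i ∈ Finset.range k, g i + g k + g (k + 1) + ∑ i ∈ Finset.range r, g (k + 2 + i) := by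
  rw [Finset.sum_range_add, Finset.sum_range_succ, Finset.sum_range_succ]

theorem sum_range_split_one (g : ℕ → ℝ) (k r : ℕ) :
    ∑ i ∈ Finset.range (k + 1 + r), g i =
      ∑ i ∈ Finset.range k, g i + g k + ∑ i ∈ Finset.range r, g (k + 1 + i) := by
  rw [Finset.sum_range_add, Finset.sum_range_succ]

/-- Superadditivity of `|·|^p` on increments of the same sign. -/
theorem abs_rpow_add_le {p a b : ℝ} (hp : 1 ≤ p) (h : 0 ≤ a * b) :
    |a| ^ p + |b| ^ p ≤ |a + b| ^ p := by
  have hab : |a + b| = |a| + |b| := by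
    rcases mul_nonneg_iff.1 h with ⟨ha, hb⟩ | ⟨ha, hb⟩
    · exact abs_add_eq_add_abs_iff a b |>.2 (Or.inl ⟨ha, hb⟩)
    · exact abs_add_eq_add_abs_iff a b |>.2 (Or.inr ⟨ha, hb⟩)
  rw [hab]
  exact Real.add_rpow_le_rpow_add (abs_nonneg a) (abs_nonneg b) hp

/-- The sequence `u` with its `(k+1)`-st point deleted. -/
def removePoint (u : ℕ → ℝ) (k : ℕ) : ℕ → ℝ := fun i => if i ≤ k then u i else u (i + 1)

theorem removePoint_mem {T : ℝ} {u : ℕ → ℝ} {k r : ℕ} (hu : u ∈ weakPartitions T (k + 2 + r)) :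
    removePoint u k ∈ weakPartitions T (k + 1 + r) := by
  obtain ⟨h0, h1, h2, h3⟩ := hu
  refine ⟨by simpa [removePoint] using h0, ?_, fun i hi => ?_, fun i => ?_⟩
  · have : ¬ k + 1 + r ≤ k := by omega
    rw [removePoint, if_neg this, ← h1]
    congr 1
    omega
  · rcases lt_trichotomy i k with h | rfl | h
    · simp only [removePoint, if_pos h.le, if_pos (show i + 1 ≤ k from h)]
      exact h2 i (by omega)
    · simp only [removePoint, le_refl, if_true, if_neg (show ¬ i + 1 ≤ i by omega)]
      exact (h2 i (by omega)).trans (h2 (i + 1) (by omega))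
    · simp only [removePoint, if_neg (show ¬ i ≤ k by omega), if_neg (show ¬ i + 1 ≤ k by omega)]
      exact h2 (i + 1) (by omega)
  · unfold removePoint
    split_ifs
    exacts [h3 _, h3 _]

/-- Deleting a point at which `X ∘ u` is monotone does not decrease the sum. -/
theorem powSum_le_remove {p : ℝ} (hp : 1 ≤ p) (X : ℝ → ℝ) {u : ℕ → ℝ} {k : ℕ} (r : ℕ)
    (h : 0 ≤ (X (u (k + 1)) - X (u k)) * (X (u (k + 2)) - X (u (k + 1)))) :
    powSum p X (k + 2 + r) u ≤ powSum p X (k + 1 + r) (removePoint u k) := by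
  unfold powSum
  rw [sum_range_split, sum_range_split_one]
  have e1 : ∑ i ∈ Finset.range k, |X (removePoint u k (i + 1)) - X (removePoint u k i)| ^ p =
      ∑ i ∈ Finset.range k, |X (u (i + 1)) - X (u i)| ^ p := by
    refine Finset.sum_congr rfl fun i hi => ?_
    have hi := Finset.mem_range.1 hi
    simp only [removePoint, if_pos hi.le, if_pos (show i + 1 ≤ k from hi)]
  have e2 : ∑ i ∈ Finset.range r,
      |X (removePoint u k (k + 1 + i + 1)) - X (removePoint u k (k + 1 + i))| ^ p =
      ∑ i ∈ Finset.range r, |X (u (k + 2 + i + 1)) - X (u (k + 2 + i))| ^ p := by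
    refine Finset.sum_congr rfl fun i _ => ?_
    simp only [removePoint, if_neg (show ¬ k + 1 + i + 1 ≤ k by omega),
      if_neg (show ¬ k + 1 + i ≤ k by omega)]
    rw [show k + 1 + i + 1 = k + 2 + i by omega]
  have e3 : |X (removePoint u k (k + 1)) - X (removePoint u k k)| = |X (u (k + 2)) - X (u k)| := by
    simp [removePoint]
  rw [e1, e2, e3]
  have := abs_rpow_add_le hp h
  rw [show X (u (k + 1)) - X (u k) + (X (u (k + 2)) - X (u (k + 1))) = X (u (k + 2)) - X (u k)
    by ring] at this
  linarith

/-- Moving a single interior point of a maximiser, between its neighbours, does not increase the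
two terms of the sum in which it occurs. -/
theorem two_terms_le_of_maximal {p T : ℝ} {X : ℝ → ℝ} {u : ℕ → ℝ} {k r : ℕ}
    (hu : u ∈ weakPartitions T (k + 2 + r))
    (hmax : ∀ v ∈ weakPartitions T (k + 2 + r), powSum p X (k + 2 + r) v ≤ powSum p X (k + 2 + r) u)
    {y : ℝ} (hy : y ∈ Icc (u k) (u (k + 2))) :
    |X y - X (u k)| ^ p + |X (u (k + 2)) - X y| ^ p ≤
      |X (u (k + 1)) - X (u k)| ^ p + |X (u (k + 2)) - X (u (k + 1))| ^ p := by
  obtain ⟨h0, h1, h2, h3⟩ := hu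
  have hne : ∀ i, i ≠ k + 1 → Function.update u (k + 1) y i = u i := fun i hi =>
    Function.update_of_ne hi _ _
  have hmem : Function.update u (k + 1) y ∈ weakPartitions T (k + 2 + r) := by
    refine ⟨by rw [hne 0 (by omega), h0], by rw [hne _ (by omega), h1], fun i hi => ?_,
      fun i => ?_⟩
    · by_cases hik : i = k
      · subst hik
        rw [hne i (by omega), Function.update_self]
        exact hy.1
      by_cases hik' : i = k + 1
      · subst hik'
        rw [hne (k + 1 + 1) (by omega), Function.update_self]
        exact hy.2
      · rw [hne i hik', hne (i + 1) (by omega)]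
        exact h2 i hi
    · by_cases hik : i = k + 1
      · subst hik
        rw [Function.update_self]
        exact ⟨(h3 k).1.trans hy.1, hy.2.trans (h3 (k + 2)).2⟩
      · rw [hne i hik]
        exact h3 i
  have key := hmax _ hmem
  unfold powSum at key
  rw [sum_range_split, sum_range_split] at key
  have e1 : ∑ i ∈ Finset.range k,
      |X (Function.update u (k + 1) y (i + 1)) - X (Function.update u (k + 1) y i)| ^ p =
      ∑ i ∈ Finset.range k, |X (u (i + 1)) - X (u i)| ^ p := by
    refine Finset.sum_congr rfl fun i hi => ?_
    have hi := Finset.mem_range.1 hi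
    rw [hne i (by omega), hne (i + 1) (by omega)]
  have e2 : ∑ i ∈ Finset.range r,
      |X (Function.update u (k + 1) y (k + 2 + i + 1)) -
        X (Function.update u (k + 1) y (k + 2 + i))| ^ p =
      ∑ i ∈ Finset.range r, |X (u (k + 2 + i + 1)) - X (u (k + 2 + i))| ^ p := by
    refine Finset.sum_congr rfl fun i _ => ?_
    rw [hne (k + 2 + i) (by omega), hne (k + 2 + i + 1) (by omega)]
  rw [e1, e2, hne k (by omega), hne (k + 1 + 1) (by omega), Function.update_self] at key
  linarith

/-- At a maximiser, an interior point whose value lies strictly above or strictly below both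
neighbouring values is a local extremum, hence a critical point. -/
theorem deriv_eq_zero_of_maximal {p T : ℝ} (hp : 1 ≤ p) {X : ℝ → ℝ} {u : ℕ → ℝ} {k r : ℕ}
    (hu : u ∈ weakPartitions T (k + 2 + r))
    (hmax : ∀ v ∈ weakPartitions T (k + 2 + r), powSum p X (k + 2 + r) v ≤ powSum p X (k + 2 + r) u)
    (hk : u k < u (k + 1)) (hk' : u (k + 1) < u (k + 2))
    (h : (X (u (k + 1)) - X (u k)) * (X (u (k + 2)) - X (u (k + 1))) < 0) :
    deriv X (u (k + 1)) = 0 := by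
  have hp0 : 0 < p := by linarith
  have hnhds : Icc (u k) (u (k + 2)) ∈ nhds (u (k + 1)) := Icc_mem_nhds hk hk'
  rcases mul_neg_iff.1 h with ⟨ha, hb⟩ | ⟨ha, hb⟩
  · refine IsLocalMax.deriv_eq_zero ?_
    filter_upwards [hnhds] with y hy
    by_contra! hlt
    have key := two_terms_le_of_maximal hu hmax hy
    have h1 : |X (u (k + 1)) - X (u k)| ^ p < |X y - X (u k)| ^ p := by
      refine Real.rpow_lt_rpow (abs_nonneg _) ?_ hp0
      rw [abs_of_pos ha, abs_of_pos (by linarith)]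
      linarith
    have h2 : |X (u (k + 2)) - X (u (k + 1))| ^ p < |X (u (k + 2)) - X y| ^ p := by
      refine Real.rpow_lt_rpow (abs_nonneg _) ?_ hp0
      rw [abs_of_neg hb, abs_of_neg (by linarith)]
      linarith
    linarith
  · refine IsLocalMin.deriv_eq_zero ?_
    filter_upwards [hnhds] with y hy
    by_contra! hlt
    have key := two_terms_le_of_maximal hu hmax hy
    have h1 : |X (u (k + 1)) - X (u k)| ^ p < |X y - X (u k)| ^ p := by
      refine Real.rpow_lt_rpow (abs_nonneg _) ?_ hp0
      rw [abs_of_neg ha, abs_of_neg (by linarith)]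
      linarith
    have h2 : |X (u (k + 2)) - X (u (k + 1))| ^ p < |X (u (k + 2)) - X y| ^ p := by
      refine Real.rpow_lt_rpow (abs_nonneg _) ?_ hp0
      rw [abs_of_pos hb, abs_of_pos (by linarith)]
      linarith
    linarith

/-- Every weak partition is dominated by a strict partition with critical interior points. -/
theorem exists_critical_ge {p T : ℝ} (hp : 1 ≤ p) (hT : 0 < T) {X : ℝ → ℝ}
    (hX : ContinuousOn X (Icc 0 T)) (n : ℕ) :
    ∀ t ∈ weakPartitions T n, ∃ (m : ℕ) (s : ℕ → ℝ),
      (IsPartition T m s ∧ ∀ i, 0 < i → i < m → deriv X (s i) = 0) ∧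
        powSum p X n t ≤ powSum p X m s := by
  induction n with
  | zero => exact fun t ht => absurd (ht.1.symm.trans ht.2.1) hT.ne
  | succ n ih =>
    intro t ht
    obtain ⟨u, hu, hmax⟩ := (isCompact_weakPartitions T (n + 1)).exists_isMaxOn ⟨t, ht⟩
      (continuousOn_powSum hp hX (n + 1))
    have hmax : ∀ v ∈ weakPartitions T (n + 1), powSum p X (n + 1) v ≤ powSum p X (n + 1) u :=
      fun v hv => hmax hv
    by_cases hmono : ∃ k, k + 2 ≤ n + 1 ∧
        0 ≤ (X (u (k + 1)) - X (u k)) * (X (u (k + 2)) - X (u (k + 1)))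
    · obtain ⟨k, hk, hprod⟩ := hmono
      obtain ⟨r, hr⟩ := Nat.exists_eq_add_of_le hk
      obtain rfl : n = k + 1 + r := by omega
      have hle := powSum_le_remove hp X r hprod
      rw [hr] at hu
      obtain ⟨m, s, hs, hsle⟩ := ih _ (removePoint_mem hu)
      refine ⟨m, s, hs, (hmax t ht).trans ?_⟩
      rw [hr]
      exact hle.trans hsle
    · push Not at hmono
      have hstrict : ∀ i < n + 1, u i < u (i + 1) := by
        intro i hi
        refine lt_of_le_of_ne (hu.2.2.1 i hi) fun heq => ?_
        -- A coincidence `u i = u (i + 1)` makes a product vanish: that of the triple starting at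
        -- `i` if it fits, and otherwise that of the triple starting at `i - 1`.
        rcases Nat.lt_or_ge i n with h | h
        · have := hmono i (by omega)
          rw [← heq] at this
          simp at this
        · obtain rfl : i = n := by omega
          rcases i with _ | j
          · exact hT.ne (hu.1.symm.trans (heq.trans hu.2.1))
          · have := hmono j (by omega)
            rw [show j + 2 = j + 1 + 1 from rfl, ← heq] at this
            simp at this
      refine ⟨n + 1, u, ⟨⟨hu.1, hu.2.1, hstrict⟩, fun i hi0 hin => ?_⟩, hmax t ht⟩
      obtain ⟨k, rfl⟩ : ∃ k, i = k + 1 := ⟨i - 1, by omega⟩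
      obtain ⟨r, hr⟩ := Nat.exists_eq_add_of_le (show k + 2 ≤ n + 1 by omega)
      refine deriv_eq_zero_of_maximal (r := r) hp (hr ▸ hu) (hr ▸ hmax) (hstrict k (by omega))
        (hstrict (k + 1) hin) (hmono k (by omega))

/-- A strict partition, with its tail beyond `n` frozen at `T`, is a weak partition. -/
theorem IsPartition.min_mem_weakPartitions {T : ℝ} {n : ℕ} {t : ℕ → ℝ} (h : IsPartition T n t) :
    (fun i => t (min i n)) ∈ weakPartitions T n := by
  obtain ⟨h0, h1, h2⟩ := h
  have hmono : Monotone fun i => t (min i n) := by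
    refine monotone_nat_of_le_succ fun i => ?_
    rcases Nat.lt_or_ge i n with hi | hi
    · simp only [min_eq_left hi.le, min_eq_left (show i + 1 ≤ n from hi)]
      exact (h2 i hi).le
    · simp only [min_eq_right hi, min_eq_right (show n ≤ i + 1 by omega), le_refl]
  refine ⟨by simpa using h0, by simpa using h1, fun i _ => hmono i.le_succ, fun i => ⟨?_, ?_⟩⟩
  · have := hmono (Nat.zero_le i)
    simpa [h0] using this
  · have := hmono (le_max_left i n)
    simpa [h1] using this

theorem powSum_min (p : ℝ) (X : ℝ → ℝ) (n : ℕ) (t : ℕ → ℝ) :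
    powSum p X n (fun i => t (min i n)) = powSum p X n t := by
  refine Finset.sum_congr rfl fun i hi => ?_
  have hi := Finset.mem_range.1 hi
  simp only [min_eq_left hi.le, min_eq_left (show i + 1 ≤ n from hi)]

/-- For a differentiable path of bounded variation, the total p-variation equals the supremum
of the p-variation sums over partitions whose interior points are critical points of `X`. -/
theorem pVariation_eq_sup_over_critical_partitions
    (p T : ℝ) (hp : 1 ≤ p) (hT : 0 < T) (X : ℝ → ℝ)
    (hdiff : ∀ t ∈ Icc (0 : ℝ) T, DifferentiableAt ℝ X t)
    (hbv : pVariation 1 X T < ⊤) :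
    pVariation p X T =
      ⨆ (n : ℕ) (t : ℕ → ℝ)
        (_ : IsPartition T n t ∧ ∀ i, 0 < i → i < n → deriv X (t i) = 0),
        ENNReal.ofReal (pVarSum p X n t) := by
  apply le_antisymm
  · refine iSup_le fun n => iSup_le fun t => iSup_le fun ht => ?_
    have hX : ContinuousOn X (Icc 0 T) := fun x hx => (hdiff x hx).continuousAt.continuousWithinAt
    obtain ⟨m, s, hs, hle⟩ := exists_critical_ge hp hT hX n _ ht.min_mem_weakPartitions
    rw [powSum_min] at hle
    refine le_iSup_of_le m (le_iSup_of_le s (le_iSup_of_le hs (ENNReal.ofReal_le_ofReal ?_)))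
    exact Real.rpow_le_rpow (Finset.sum_nonneg fun i _ => Real.rpow_nonneg (abs_nonneg _) _) hle
      (by positivity)
  · exact iSup_le fun n => iSup_le fun t => iSup_le fun ht =>
      le_iSup_of_le n (le_iSup_of_le t (le_iSup_of_le ht.1 le_rfl))
end

section
/- Let w : [0,∞) → ℝ be continuous with w(0) = 0, let ε, σ > 0 and y₁, y₂ ∈ ℝ. Define Y₂(t) := y₂ e^{−t/ε²} + (1/ε) w(t) − (1/ε³) ∫_0^t e^{−(t−s)/ε²} w(s) ds and Y₁(t) := y₁ + (σ/ε) ∫_0^t Y₂(s) ds. Then Y₁(t) = y₁ + σ w(t) − ε σ (Y₂(t) − y₂) for all t ≥ 0, and consequently for every T > 0, sup_{t∈[0,T]} |Y₁(t) − y₁ − σ w(t)| = ε σ · sup_{t∈[0,T]} |Y₂(t) − y₂|. -/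
/-!
The process `Z = Y₂ - w / ε` is differentiable although `w` is only continuous: pulling
`e^{-t/ε²}` out of the convolution integral gives
`Z t = e^{-t/ε²} (y₂ - ε⁻³ ∫₀ᵗ e^{s/ε²} w s ds)`, whence `Z' = -Y₂ / ε²` and `Z 0 = y₂`.
Integrating, `∫₀ᵗ Y₂ = -ε² (Z t - y₂)`, which is the pathwise identity after multiplication by
`σ / ε`. The two functions under the suprema then differ by the factor `ε σ ≥ 0`.
-/

open Real MeasureTheory intervalIntegral Set

/-- The integral form of `dY₂ = -Y₂ / ε² dt + dw / ε`, solved for `∫₀ᵗ Y₂`. -/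
lemma integral_fast_variable
    (w : ℝ → ℝ) (hw : Continuous w) (ε : ℝ) (hε : 0 < ε) (y₂ : ℝ) (Y₂ : ℝ → ℝ)
    (hY₂ : ∀ t, Y₂ t =
      y₂ * Real.exp (-t / ε ^ 2) + (1 / ε) * w t -
        (1 / ε ^ 3) * ∫ s in (0 : ℝ)..t, Real.exp (-(t - s) / ε ^ 2) * w s) (t : ℝ) :
    ∫ s in (0 : ℝ)..t, Y₂ s = -ε ^ 2 * (Y₂ t - (1 / ε) * w t - y₂) := by
  have hε' : ε ≠ 0 := hε.ne'
  have hg : Continuous fun s => Real.exp (s / ε ^ 2) * w s := by fun_prop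
  have hY₂_factored : ∀ t, Y₂ t = Real.exp (-t / ε ^ 2) *
      (y₂ - (1 / ε ^ 3) * ∫ s in (0 : ℝ)..t, Real.exp (s / ε ^ 2) * w s) + (1 / ε) * w t := by
    intro t
    have h : ∫ s in (0 : ℝ)..t, Real.exp (-(t - s) / ε ^ 2) * w s =
        Real.exp (-t / ε ^ 2) * ∫ s in (0 : ℝ)..t, Real.exp (s / ε ^ 2) * w s := by
      rw [← intervalIntegral.integral_const_mul]
      congr 1
      ext s
      rw [← mul_assoc, ← Real.exp_add]
      congr 2
      ring
    rw [hY₂ t, h]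
    ring
  have hder : ∀ t, HasDerivAt (fun t => -ε ^ 2 * (Real.exp (-t / ε ^ 2) *
      (y₂ - (1 / ε ^ 3) * ∫ s in (0 : ℝ)..t, Real.exp (s / ε ^ 2) * w s))) (Y₂ t) t := by
    intro t
    have hI : HasDerivAt (fun t => ∫ s in (0 : ℝ)..t, Real.exp (s / ε ^ 2) * w s)
        (Real.exp (t / ε ^ 2) * w t) t := hg.integral_hasStrictDerivAt 0 t |>.hasDerivAt
    have hE : HasDerivAt (fun t : ℝ => Real.exp (-t / ε ^ 2))
        (Real.exp (-t / ε ^ 2) * (-1 / ε ^ 2)) t :=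
      ((hasDerivAt_id t).neg.div_const (ε ^ 2)).exp
    have hexp : Real.exp (-t / ε ^ 2) * Real.exp (t / ε ^ 2) = 1 := by
      rw [← Real.exp_add, neg_div, neg_add_cancel, Real.exp_zero]
    refine ((hE.mul ((hI.const_mul (1 / ε ^ 3)).const_sub y₂)).const_mul (-ε ^ 2)).congr_deriv ?_
    rw [hY₂_factored t]
    generalize (∫ s in (0 : ℝ)..t, Real.exp (s / ε ^ 2) * w s) = I
    have e1 : -ε ^ 2 * (-1 / ε ^ 2) = 1 := by field_simp
    have e2 : ε ^ 2 * (1 / ε ^ 3) = 1 / ε := by field_simp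
    linear_combination (Real.exp (-t / ε ^ 2) * (y₂ - 1 / ε ^ 3 * I)) * e1 +
      (ε ^ 2 * (1 / ε ^ 3) * w t) * hexp + w t * e2
  have hcont : Continuous Y₂ := by
    have hZ : Continuous fun t => -ε ^ 2 * (Real.exp (-t / ε ^ 2) *
        (y₂ - (1 / ε ^ 3) * ∫ s in (0 : ℝ)..t, Real.exp (s / ε ^ 2) * w s)) :=
      continuous_iff_continuousAt.2 fun t => (hder t).continuousAt
    have h : Y₂ = fun t => (-1 / ε ^ 2) * (-ε ^ 2 * (Real.exp (-t / ε ^ 2) *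
        (y₂ - (1 / ε ^ 3) * ∫ s in (0 : ℝ)..t, Real.exp (s / ε ^ 2) * w s))) +
        (1 / ε) * w t := by
      ext t
      rw [hY₂_factored t]
      have e1 : (-1 / ε ^ 2) * -ε ^ 2 = 1 := by field_simp
      rw [← mul_assoc (-1 / ε ^ 2), e1, one_mul]
    rw [h]
    exact (continuous_const.mul hZ).add (continuous_const.mul hw)
  rw [intervalIntegral.integral_eq_sub_of_hasDerivAt (fun s _ => hder s)
    (hcont.intervalIntegrable 0 t), hY₂_factored t]
  simp only [intervalIntegral.integral_same, neg_zero, zero_div, Real.exp_zero]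
  ring

/-- For the multiscale Ornstein–Uhlenbeck system with fast variable
`Y₂(t) = y₂e^{−t/ε²} + (1/ε)w(t) − (1/ε³)∫₀ᵗ e^{−(t−s)/ε²} w(s) ds` and slow variable
`Y₁(t) = y₁ + (σ/ε)∫₀ᵗ Y₂(s) ds`, one has
`Y₁(t) = y₁ + σw(t) − εσ(Y₂(t) − y₂)` for all `t ≥ 0`, and consequently for every `T > 0`
the uniform distance of `Y₁` from `y₁ + σw` on `[0, T]` equals `εσ` times the uniform
distance of `Y₂` from `y₂`. -/
theorem multiscale_ou_identity
    (w : ℝ → ℝ) (hw : Continuous w) (hw0 : w 0 = 0)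
    (ε σ : ℝ) (hε : 0 < ε) (hσ : 0 < σ) (y₁ y₂ : ℝ)
    (Y₁ Y₂ : ℝ → ℝ)
    (hY₂ : ∀ t, Y₂ t =
      y₂ * Real.exp (-t / ε ^ 2) + (1 / ε) * w t -
        (1 / ε ^ 3) * ∫ s in (0 : ℝ)..t, Real.exp (-(t - s) / ε ^ 2) * w s)
    (hY₁ : ∀ t, Y₁ t = y₁ + (σ / ε) * ∫ s in (0 : ℝ)..t, Y₂ s) :
    (∀ t : ℝ, 0 ≤ t → Y₁ t = y₁ + σ * w t - ε * σ * (Y₂ t - y₂)) ∧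
      ∀ T : ℝ, 0 < T →
        sSup ((fun t => |Y₁ t - y₁ - σ * w t|) '' Icc (0 : ℝ) T) =
          ε * σ * sSup ((fun t => |Y₂ t - y₂|) '' Icc (0 : ℝ) T) := by
  have key : ∀ t : ℝ, Y₁ t = y₁ + σ * w t - ε * σ * (Y₂ t - y₂) := by
    intro t
    rw [hY₁ t, integral_fast_variable w hw ε hε y₂ Y₂ hY₂ t]
    have hε' : ε ≠ 0 := hε.ne'
    field_simp
    ring
  refine ⟨fun t _ => key t, fun T _ => ?_⟩
  have hpos : 0 ≤ ε * σ := (mul_pos hε hσ).le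
  rw [← smul_eq_mul (ε * σ), ← Real.sSup_smul_of_nonneg hpos, ← Set.image_smul, Set.image_image]
  congr 2
  ext t
  rw [key t, smul_eq_mul, ← abs_of_nonneg hpos, ← abs_mul, abs_of_nonneg hpos, ← abs_neg]
  congr 1
  ring
end

section
/- For every δ > 0 and t > 0, ∫_{−∞}^{∞} f(t,z) g_δ(z) dz = 4 e^t sinh(δ) sinh(t) / (π sinh(δ+t) √((1 − e^{−2δ})(1 − e^{−2t})) (e^{2t} − 1)), where f(t,z) := (2/√π) |z| e^{−t} (1 − e^{−2t})^{−3/2} exp(−z² e^{−2t}/(1 − e^{−2t})) and g_δ is the density of the Gaussian measure on ℝ with mean 0 and variance (1 − e^{−2δ})/2. -/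
/-!
The integrand is a constant times `|z| * exp (-b z²)` with
`b = e^{-2t}/(1 - e^{-2t}) + 1/(1 - e^{-2δ})
   = (1 - e^{-2(δ+t)}) / ((1 - e^{-2t})(1 - e^{-2δ}))`,
and `∫ |z| exp (-b z²) dz = 1/b` (`integral_abs_mul_exp_neg_mul_sq`). The closed form then follows
from `sinh s = e^s (1 - e^{-2s})/2`, after writing everything as a rational function of
`e^{-t}`, `e^{-δ}`, `√(1 - e^{-2t})` and `√(1 - e^{-2δ})`.
-/

open Real MeasureTheory

/-- `f t z` is the density (in `t`) of the first zero-crossing time of a standard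
Ornstein–Uhlenbeck process started at `z`. -/
noncomputable def ouFirstZeroDensity (t z : ℝ) : ℝ :=
  (2 / Real.sqrt π) * |z| * Real.exp (-t) / (1 - Real.exp (-2 * t)) ^ ((3 : ℝ) / 2) *
    Real.exp (-(z ^ 2 * Real.exp (-2 * t)) / (1 - Real.exp (-2 * t)))

/-- `gaussDensity δ z` is the density of the Gaussian measure on `ℝ` with mean `0` and
variance `(1 − e^{−2δ})/2`. -/
noncomputable def gaussDensity (δ z : ℝ) : ℝ :=
  (1 / Real.sqrt (2 * π * ((1 - Real.exp (-2 * δ)) / 2))) *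
    Real.exp (-z ^ 2 / (2 * ((1 - Real.exp (-2 * δ)) / 2)))

/-- First absolute moment of an unnormalised centred Gaussian. -/
lemma integral_abs_mul_exp_neg_mul_sq {b : ℝ} (hb : 0 < b) :
    ∫ z : ℝ, |z| * Real.exp (-b * z ^ 2) = 1 / b := by
  have h1 : ∫ z : ℝ, |z| * Real.exp (-b * z ^ 2)
      = 2 * ∫ z in Set.Ioi (0 : ℝ), z * Real.exp (-b * z ^ 2) := by
    have := integral_comp_abs (f := fun z : ℝ => z * Real.exp (-b * z ^ 2))
    simpa only [sq_abs] using this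
  have h2 := integral_rpow_mul_exp_neg_mul_rpow (p := 2) (q := 1) (b := b)
    (by norm_num) (by norm_num) hb
  have h3 : ((1 : ℝ) + 1) / 2 = 1 := by norm_num
  simp only [Real.rpow_one, Real.rpow_two, neg_div, h3, Real.rpow_neg_one, Real.Gamma_one] at h2
  rw [h1, h2]
  ring

/-- Mixing the first zero-crossing density over the Gaussian initial condition:
`∫ f(t,z) g_δ(z) dz = 4 eᵗ sinh δ sinh t / (π sinh(δ+t) √((1−e^{−2δ})(1−e^{−2t})) (e^{2t}−1))`. -/
theorem mixed_first_zero_density (δ t : ℝ) (hδ : 0 < δ) (ht : 0 < t) :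
    ∫ z : ℝ, ouFirstZeroDensity t z * gaussDensity δ z =
      4 * Real.exp t * Real.sinh δ * Real.sinh t /
        (π * Real.sinh (δ + t) *
          Real.sqrt ((1 - Real.exp (-2 * δ)) * (1 - Real.exp (-2 * t))) *
          (Real.exp (2 * t) - 1)) := by
  have hx : 0 < Real.exp (-t) := Real.exp_pos _
  have hy : 0 < Real.exp (-δ) := Real.exp_pos _
  have hx1 : Real.exp (-t) < 1 := by rw [Real.exp_lt_one_iff]; linarith
  have hy1 : Real.exp (-δ) < 1 := by rw [Real.exp_lt_one_iff]; linarith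
  have e1 : Real.exp (-2 * t) = Real.exp (-t) ^ 2 := by
    rw [← Real.exp_nat_mul]; congr 1; push_cast; ring
  have e2 : Real.exp (-2 * δ) = Real.exp (-δ) ^ 2 := by
    rw [← Real.exp_nat_mul]; congr 1; push_cast; ring
  have e3 : Real.exp t = (Real.exp (-t))⁻¹ := by rw [← Real.exp_neg, neg_neg]
  have e4 : Real.exp δ = (Real.exp (-δ))⁻¹ := by rw [← Real.exp_neg, neg_neg]
  have e5 : Real.exp (2 * t) = (Real.exp (-t) ^ 2)⁻¹ := by
    rw [← e1, ← Real.exp_neg]; congr 1; ring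
  simp only [ouFirstZeroDensity, gaussDensity, Real.sinh_eq, neg_add, Real.exp_add, e1, e2, e5]
  rw [e3, e4]
  generalize Real.exp (-t) = x at *
  generalize Real.exp (-δ) = y at *
  have hA : 0 < 1 - x ^ 2 := by nlinarith
  have hB : 0 < 1 - y ^ 2 := by nlinarith
  have hD : 0 < 1 - x ^ 2 * y ^ 2 := by nlinarith [mul_pos (pow_pos hx 2) hB]
  have hb : 0 < (1 - x ^ 2 * y ^ 2) / ((1 - x ^ 2) * (1 - y ^ 2)) := by positivity
  have hA32 : (1 - x ^ 2) ^ ((3 : ℝ) / 2) = (1 - x ^ 2) * √(1 - x ^ 2) := by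
    rw [Real.sqrt_eq_rpow, show (3 : ℝ) / 2 = 1 + 1 / 2 by norm_num, Real.rpow_add hA,
      Real.rpow_one]
  have hpiB : √(2 * π * ((1 - y ^ 2) / 2)) = √π * √(1 - y ^ 2) := by
    rw [← Real.sqrt_mul Real.pi_pos.le]; congr 1; ring
  have key : ∀ z : ℝ,
      2 / √π * |z| * x / (1 - x ^ 2) ^ ((3 : ℝ) / 2) * Real.exp (-(z ^ 2 * x ^ 2) / (1 - x ^ 2)) *
        (1 / √(2 * π * ((1 - y ^ 2) / 2)) * Real.exp (-z ^ 2 / (2 * ((1 - y ^ 2) / 2)))) =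
      2 / √π * x / ((1 - x ^ 2) * √(1 - x ^ 2)) * (1 / (√π * √(1 - y ^ 2))) *
        (|z| * Real.exp (-((1 - x ^ 2 * y ^ 2) / ((1 - x ^ 2) * (1 - y ^ 2))) * z ^ 2)) := by
    intro z
    have hexp : -((1 - x ^ 2 * y ^ 2) / ((1 - x ^ 2) * (1 - y ^ 2))) * z ^ 2 =
        -(z ^ 2 * x ^ 2) / (1 - x ^ 2) + -z ^ 2 / (2 * ((1 - y ^ 2) / 2)) := by
      have := hA.ne'
      have := hB.ne'
      field_simp
      ring
    rw [hA32, hpiB, hexp, Real.exp_add]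
    ring
  simp only [key]
  rw [integral_const_mul, integral_abs_mul_exp_neg_mul_sq hb, Real.sqrt_mul hB.le]
  have hsA : 0 < √(1 - x ^ 2) := Real.sqrt_pos.2 hA
  have hsB : 0 < √(1 - y ^ 2) := Real.sqrt_pos.2 hB
  have hp : 0 < √π := Real.sqrt_pos.2 Real.pi_pos
  have qp : √π ^ 2 = π := Real.sq_sqrt Real.pi_pos.le
  have hπ := Real.pi_pos
  -- In terms of `x = e^{-t}`, `y = e^{-δ}`: `sinh δ`, `sinh t`, `sinh (δ + t)` and `e^{2t} - 1`.
  have s1 : (y⁻¹ - y) / 2 = (1 - y ^ 2) / (2 * y) := by field_simp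
  have s2 : (x⁻¹ - x) / 2 = (1 - x ^ 2) / (2 * x) := by field_simp
  have s3 : (y⁻¹ * x⁻¹ - y * x) / 2 = (1 - x ^ 2 * y ^ 2) / (2 * x * y) := by field_simp
  have s4 : (x ^ 2)⁻¹ - 1 = (1 - x ^ 2) / x ^ 2 := by field_simp
  rw [s1, s2, s3, s4]
  generalize √(1 - x ^ 2) = a at *
  generalize √(1 - y ^ 2) = c at *
  generalize 1 - x ^ 2 * y ^ 2 = D at *
  generalize 1 - x ^ 2 = A at *
  generalize 1 - y ^ 2 = B at *
  field_simp
  rw [qp]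
  ring
end

section
/- ∫_0^∞ t · H(t) dt = √2, where H(t) := 4 e^{−t} √(e^{−t} sinh t) / (π (1 − e^{−2t})²). -/
/-!
Since `e^{-t} sinh t = (1 - e^{-2t}) / 2`, with `u = e^{-t}` one has
`H(t) = (4 / (π √2)) u (1 - u²)^{-3/2}`. As `-u / √(1 - u²)` is an antiderivative of
`u (1 - u²)^{-3/2}` in `t`, integration by parts shows that `t H(t)` has the elementary
antiderivative `(4 / (π √2)) G(t)`, `G(t) = -(t u / √(1 - u²)) - arcsin u`. It tends to `0` at
infinity and to `-(4 / (π √2)) (π / 2) = -√2` at `0`; the integrand being nonnegative,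
the fundamental theorem of calculus on `(0, ∞)` applies.
-/

open Real MeasureTheory Set

/-- `H(t) = 4 e^{−t} √(e^{−t} sinh t) / (π (1 − e^{−2t})²)`. -/
noncomputable def H (t : ℝ) : ℝ :=
  4 * Real.exp (-t) * Real.sqrt (Real.exp (-t) * Real.sinh t) /
    (π * (1 - Real.exp (-2 * t)) ^ 2)

/-- Up to the factor `4 / (π √2)`, an antiderivative of `t * H t`. At `t = 0` the convention
`x / 0 = 0` gives the first term its limiting value `0`. -/
noncomputable def G (t : ℝ) : ℝ :=
  -(t * Real.exp (-t) / √(1 - Real.exp (-t) ^ 2)) - Real.arcsin (Real.exp (-t))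

lemma one_sub_exp_sq_pos {t : ℝ} (ht : 0 < t) : 0 < 1 - Real.exp (-t) ^ 2 := by
  have h1 : Real.exp (-t) < 1 := by rw [Real.exp_lt_one_iff]; linarith
  have h0 := Real.exp_pos (-t)
  nlinarith

lemma H_eq (t : ℝ) : H t = 4 / (π * √2) *
    (Real.exp (-t) * √(1 - Real.exp (-t) ^ 2) / (1 - Real.exp (-t) ^ 2) ^ 2) := by
  have h2 : Real.exp (-2 * t) = Real.exp (-t) ^ 2 := by
    rw [← Real.exp_nat_mul]; congr 1; push_cast; ring
  have hs : Real.exp (-t) * Real.sinh t = (1 - Real.exp (-t) ^ 2) / 2 := by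
    have : Real.exp (-t) * Real.exp t = 1 := by rw [← Real.exp_add]; simp
    rw [Real.sinh_eq]; linear_combination this / 2
  unfold H
  rw [hs, h2, Real.sqrt_div' _ (by norm_num)]
  simp only [div_eq_mul_inv, mul_inv]
  ring

lemma hasDerivAt_G {t : ℝ} (ht : 0 < t) : HasDerivAt G
    (t * (Real.exp (-t) * √(1 - Real.exp (-t) ^ 2) / (1 - Real.exp (-t) ^ 2) ^ 2)) t := by
  have hp := one_sub_exp_sq_pos ht
  have hu : HasDerivAt (fun t : ℝ => Real.exp (-t)) (-Real.exp (-t)) t := by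
    simpa using (hasDerivAt_id t).neg.exp
  have h0 := Real.exp_pos (-t)
  have hs : HasDerivAt (fun t : ℝ => √(1 - Real.exp (-t) ^ 2)) _ t :=
    ((hu.pow 2).const_sub 1).sqrt hp.ne'
  have hr := Real.sqrt_pos.2 hp
  have ha := (Real.hasDerivAt_arcsin (x := Real.exp (-t)) (by linarith)
    (by nlinarith)).comp t hu
  have h := ((((hasDerivAt_id t).mul hu).div hs hr.ne').neg).sub ha
  refine HasDerivAt.congr_deriv h ?_
  have hsq := Real.sq_sqrt hp.le
  simp only [id, Pi.mul_apply, Pi.pow_apply]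
  generalize Real.exp (-t) = u at *
  generalize √(1 - u ^ 2) = s at *
  rw [← hsq]
  have hu2 : u ^ 2 = 1 - s ^ 2 := by linarith
  field_simp
  push_cast
  linear_combination (2 * t) * hu2

/-- The bound comes from `e^{2t} - 1 ≥ 2t`. -/
lemma term_le_sqrt {t : ℝ} (ht : 0 ≤ t) :
    t * Real.exp (-t) / √(1 - Real.exp (-t) ^ 2) ≤ √t := by
  rcases ht.eq_or_lt with rfl | ht
  · simp
  have hp := one_sub_exp_sq_pos ht
  rw [div_le_iff₀ (Real.sqrt_pos.2 hp), ← Real.sqrt_mul ht.le]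
  apply Real.le_sqrt_of_sq_le
  have h1 := Real.add_one_le_exp (2 * t)
  have h2 : Real.exp (2 * t) * Real.exp (-t) ^ 2 = 1 := by
    rw [← Real.exp_nat_mul, ← Real.exp_add]; simp
  have h3 : (2 * t + 1) * Real.exp (-t) ^ 2 ≤ 1 :=
    (mul_le_mul_of_nonneg_right h1 (sq_nonneg _)).trans h2.le
  have h4 : t * Real.exp (-t) ^ 2 ≤ 1 - Real.exp (-t) ^ 2 := by
    nlinarith [mul_nonneg ht.le (sq_nonneg (Real.exp (-t)))]
  nlinarith

lemma continuousWithinAt_G : ContinuousWithinAt G (Ici 0) 0 := by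
  apply ContinuousWithinAt.sub
  · apply ContinuousWithinAt.neg
    have hs : Filter.Tendsto (fun t : ℝ => √t) (nhdsWithin 0 (Ici 0)) (nhds 0) := by
      have h := (Real.continuous_sqrt.tendsto 0).mono_left
        (nhdsWithin_le_nhds (s := Ici (0 : ℝ)))
      rwa [Real.sqrt_zero] at h
    simp only [ContinuousWithinAt, zero_mul, zero_div]
    refine tendsto_of_tendsto_of_tendsto_of_le_of_le' tendsto_const_nhds hs ?_ ?_
    · filter_upwards [self_mem_nhdsWithin] with t ht
      have : (0 : ℝ) ≤ t := ht
      positivity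
    · filter_upwards [self_mem_nhdsWithin] with t ht
      exact term_le_sqrt ht
  · exact (Real.continuous_arcsin.comp (by fun_prop)).continuousWithinAt

lemma tendsto_G : Filter.Tendsto G Filter.atTop (nhds 0) := by
  have hu : Filter.Tendsto (fun t : ℝ => Real.exp (-t)) Filter.atTop (nhds 0) :=
    Real.tendsto_exp_neg_atTop_nhds_zero
  have ht : Filter.Tendsto (fun t : ℝ => t * Real.exp (-t)) Filter.atTop (nhds 0) := by
    simpa using Real.tendsto_pow_mul_exp_neg_atTop_nhds_zero 1
  have hs := ((hu.pow 2).const_sub 1).sqrt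
  have ha := (Real.continuous_arcsin.tendsto 0).comp hu
  have h := ((ht.div hs (by simp)).neg).sub ha
  simp only [neg_zero, zero_div, Real.arcsin_zero, sub_zero] at h
  exact h

/-- `K_1 = ∫₀^∞ t H(t) dt = √2`. -/
theorem K_one_eq_sqrt_two : ∫ t in Ioi (0 : ℝ), t * H t = Real.sqrt 2 := by
  have key := integral_Ioi_of_hasDerivAt_of_nonneg continuousWithinAt_G
    (fun t ht => hasDerivAt_G ht)
    (fun t ht => by
      have : (0 : ℝ) < t := ht
      positivity) tendsto_G
  have hG : G 0 = -(π / 2) := by simp [G]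
  have h2 : √(2 : ℝ) ^ 2 = 2 := Real.sq_sqrt (by norm_num)
  simp_rw [H_eq, mul_left_comm _ (4 / (π * √2))]
  rw [integral_const_mul, key, hG]
  have := Real.pi_pos
  field_simp
  rw [h2]
  ring
end

section
/- ∫_0^∞ t² · H(t) dt = 2√2 · log 2, where H(t) := 4 e^{−t} √(e^{−t} sinh t) / (π (1 − e^{−2t})²). -/
/-!
Since `e^{-t} sinh t = (1 - e^{-2t}) / 2`, the substitution `t = -log (sin θ)` turns the integral
into `(2√2/π) ∫_0^{π/2} (log sin θ)² / cos² θ dθ`. Integrating by parts against `tan θ` (the boundary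
terms vanish, because `log sin θ = O(cos² θ)` at `π/2` and `s log² s → 0` at `0`) leaves
`-2 ∫_0^{π/2} log sin θ dθ = π log 2`, Euler's integral, which is in Mathlib.

To have integrability at once, the integration by parts is phrased through the
continuous function `primG θ = tan θ (log sin θ)² - 2 ∫_0^θ log sin`, whose derivative on
`(0, π/2)` is the nonnegative integrand.
-/

open Real MeasureTheory Set

/-- The boundary term `tan θ (log sin θ)²` of the integration by parts; the convention `x / 0 = 0`
gives it its limit value `0` at `π/2`. -/
noncomputable def bdryF (θ : ℝ) : ℝ := sin θ / cos θ * Real.log (sin θ) ^ 2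

/-- A primitive of `(log sin θ)² / cos² θ` on `(0, π/2)`, continuous up to the endpoints. -/
noncomputable def primG (θ : ℝ) : ℝ := bdryF θ - 2 * ∫ x in (0 : ℝ)..θ, Real.log (sin x)

/-- For `s = sin θ ∈ (0, 1]` the bound `-log s ≤ (1 - s) / s ≤ cos² θ / s` controls the boundary
term near `π/2`. -/
lemma abs_bdryF_le {θ : ℝ} (h0 : 0 < θ) (h1 : θ ≤ π / 2) :
    |bdryF θ| ≤ cos θ ^ 3 / sin θ := by
  have hs : 0 < sin θ := sin_pos_of_pos_of_lt_pi h0 (by linarith [pi_pos])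
  have hs1 := sin_le_one θ
  have hc : 0 ≤ cos θ := cos_nonneg_of_neg_pi_div_two_le_of_le (by linarith [pi_pos]) h1
  have hsc := sin_sq_add_cos_sq θ
  unfold bdryF
  rcases hc.eq_or_lt with hc | hc
  · simp [← hc]
  have hl : -Real.log (sin θ) ≤ cos θ ^ 2 / sin θ := by
    have := Real.one_sub_inv_le_log_of_pos hs
    have h2 : (sin θ)⁻¹ - 1 ≤ cos θ ^ 2 / sin θ := by
      rw [le_div_iff₀ hs, sub_mul, inv_mul_cancel₀ hs.ne']
      nlinarith
    linarith
  have hl0 : 0 ≤ -Real.log (sin θ) := by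
    linarith [Real.log_nonpos hs.le hs1]
  rw [abs_of_nonneg (by positivity)]
  calc sin θ / cos θ * Real.log (sin θ) ^ 2
      = sin θ / cos θ * (-Real.log (sin θ)) ^ 2 := by ring
    _ ≤ sin θ / cos θ * (cos θ ^ 2 / sin θ) ^ 2 := by gcongr
    _ = cos θ ^ 3 / sin θ := by field_simp

lemma continuousOn_bdryF : ContinuousOn bdryF (Icc 0 (π / 2)) := by
  intro θ hθ
  rcases hθ.2.eq_or_lt with h | h
  · subst h
    have h0 : bdryF (π / 2) = 0 := by simp [bdryF]
    unfold ContinuousWithinAt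
    rw [h0]
    have hlim : Filter.Tendsto (fun θ => cos θ ^ 3 / sin θ)
        (nhdsWithin (π / 2) (Icc 0 (π / 2))) (nhds 0) := by
      have : ContinuousAt (fun θ => cos θ ^ 3 / sin θ) (π / 2) :=
        ContinuousAt.div (by fun_prop) (by fun_prop) (by simp)
      have h2 := this.tendsto
      simp only [cos_pi_div_two] at h2
      norm_num at h2
      exact h2.mono_left nhdsWithin_le_nhds
    refine squeeze_zero_norm' ?_ hlim
    have hpos : ∀ᶠ x in nhdsWithin (π / 2) (Icc 0 (π / 2)), (0 : ℝ) < x :=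
      nhdsWithin_le_nhds (lt_mem_nhds (by positivity))
    filter_upwards [self_mem_nhdsWithin, hpos] with x hx hx0
    exact abs_bdryF_le hx0 hx.2
  · have hc : cos θ ≠ 0 := ne_of_gt (cos_pos_of_mem_Ioo ⟨by linarith [hθ.1, pi_pos], h⟩)
    -- With `u = √(sin θ)`, `sin θ (log sin θ)² = 4 (u log u)²`, which is continuous even at `u = 0`.
    have key : ContinuousWithinAt
        (fun x => 4 * (√(sin x) * Real.log √(sin x)) ^ 2 / cos x) (Icc 0 (π / 2)) θ := by
      have hm : Continuous fun x => √(sin x) * Real.log √(sin x) :=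
        Real.continuous_mul_log.comp (f := fun x => √(sin x)) (by fun_prop)
      exact (ContinuousAt.div (continuous_const.mul (hm.pow 2)).continuousAt
        continuous_cos.continuousAt hc).continuousWithinAt
    have heq : ∀ x ∈ Icc 0 (π / 2),
        bdryF x = 4 * (√(sin x) * Real.log √(sin x)) ^ 2 / cos x := by
      intro x hx
      have hs : 0 ≤ sin x := sin_nonneg_of_nonneg_of_le_pi hx.1 (by linarith [hx.2, pi_pos])
      rw [Real.log_sqrt hs, mul_pow, Real.sq_sqrt hs, bdryF]
      ring
    exact key.congr heq (heq θ hθ)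

lemma hasDerivAt_primG {θ : ℝ} (hθ : θ ∈ Ioo 0 (π / 2)) :
    HasDerivAt primG (Real.log (sin θ) ^ 2 / cos θ ^ 2) θ := by
  have hs : sin θ ≠ 0 := (sin_pos_of_pos_of_lt_pi hθ.1 (by linarith [hθ.2, pi_pos])).ne'
  have hc : cos θ ≠ 0 := (cos_pos_of_mem_Ioo ⟨by linarith [hθ.1, pi_pos], hθ.2⟩).ne'
  have h1 : HasDerivAt (fun θ => ∫ x in (0 : ℝ)..θ, Real.log (sin x)) (Real.log (sin θ)) θ := by
    refine intervalIntegral.integral_hasDerivAt_right intervalIntegrable_log_sin ?_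
      ((Real.continuousAt_log hs).comp continuous_sin.continuousAt)
    exact (Real.measurable_log.comp measurable_sin).stronglyMeasurable.stronglyMeasurableAtFilter
  have h2 := (((hasDerivAt_sin θ).div (hasDerivAt_cos θ) hc).mul
    (((hasDerivAt_sin θ).log hs).pow 2)).sub (h1.const_mul 2)
  refine HasDerivAt.congr_deriv (f := primG) h2 ?_
  have hsc := sin_sq_add_cos_sq θ
  simp
  field_simp
  linear_combination Real.log (sin θ) ^ 2 * hsc

lemma continuousOn_primG : ContinuousOn primG (Icc 0 (π / 2)) := by
  refine continuousOn_bdryF.sub (ContinuousOn.mul continuousOn_const ?_)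
  exact (intervalIntegral.continuous_primitive
    (fun a b => intervalIntegrable_log_sin) 0).continuousOn

lemma integral_log_sin_sq_div_cos_sq :
    ∫ θ in Ioo 0 (π / 2), Real.log (sin θ) ^ 2 / cos θ ^ 2 = π * Real.log 2 := by
  have hle : (0 : ℝ) ≤ π / 2 := by positivity
  have hint := intervalIntegral.integrableOn_deriv_of_nonneg continuousOn_primG
    (fun x hx => hasDerivAt_primG hx) (fun x _ => by positivity)
  rw [← integral_Ioc_eq_integral_Ioo, ← intervalIntegral.integral_of_le hle,
    intervalIntegral.integral_eq_sub_of_hasDerivAt_of_le hle continuousOn_primG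
      (fun x hx => hasDerivAt_primG hx)
      ((intervalIntegrable_iff_integrableOn_Ioc_of_le hle).2 hint)]
  simp only [primG, bdryF, integral_log_sin_zero_pi_div_two]
  simp
  ring

lemma image_neg_log_sin :
    (fun θ => -Real.log (sin θ)) '' Ioo 0 (π / 2) = Ioi 0 := by
  ext t
  constructor
  · rintro ⟨θ, hθ, rfl⟩
    have hs : 0 < sin θ := sin_pos_of_pos_of_lt_pi hθ.1 (by linarith [hθ.2, pi_pos])
    have hs1 : sin θ < 1 := by
      rw [← sin_pi_div_two]
      exact sin_lt_sin_of_lt_of_le_pi_div_two (by linarith [hθ.1, pi_pos]) le_rfl hθ.2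
    simpa using Real.log_neg hs hs1
  · intro ht
    have ht : 0 < t := ht
    have h1 : Real.exp (-t) < 1 := by simpa using ht
    refine ⟨arcsin (Real.exp (-t)), ⟨arcsin_pos.2 (exp_pos _), arcsin_lt_pi_div_two.2 h1⟩, ?_⟩
    simp only
    rw [sin_arcsin (by linarith [exp_pos (-t)]) h1.le, Real.log_exp, neg_neg]

lemma injOn_neg_log_sin : InjOn (fun θ => -Real.log (sin θ)) (Ioo 0 (π / 2)) := by
  intro x hx y hy h
  have hsx : 0 < sin x := sin_pos_of_pos_of_lt_pi hx.1 (by linarith [hx.2, pi_pos])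
  have hsy : 0 < sin y := sin_pos_of_pos_of_lt_pi hy.1 (by linarith [hy.2, pi_pos])
  have h2 := Real.log_injOn_pos hsx hsy (neg_injective h)
  exact injOn_sin ⟨by linarith [hx.1, pi_pos], hx.2.le⟩ ⟨by linarith [hy.1, pi_pos], hy.2.le⟩ h2

/-- The integrand after the substitution `t = -log (sin θ)`, Jacobian included. -/
lemma integrand_subst {θ : ℝ} (hθ : θ ∈ Ioo 0 (π / 2)) :
    |-(cos θ / sin θ)| • ((-Real.log (sin θ)) ^ 2 * H (-Real.log (sin θ))) =
      2 * √2 / π * (Real.log (sin θ) ^ 2 / cos θ ^ 2) := by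
  have hs : 0 < sin θ := sin_pos_of_pos_of_lt_pi hθ.1 (by linarith [hθ.2, pi_pos])
  have hc : 0 < cos θ := cos_pos_of_mem_Ioo ⟨by linarith [hθ.1, pi_pos], hθ.2⟩
  have hsc := sin_sq_add_cos_sq θ
  have he : Real.exp (-(-Real.log (sin θ))) = sin θ := by rw [neg_neg, Real.exp_log hs]
  have he' : Real.exp (-Real.log (sin θ)) = (sin θ)⁻¹ := by rw [Real.exp_neg, Real.exp_log hs]
  have he2 : Real.exp (-2 * -Real.log (sin θ)) = sin θ ^ 2 := by
    rw [show -2 * -Real.log (sin θ) = Real.log (sin θ) + Real.log (sin θ) by ring,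
      Real.exp_add, Real.exp_log hs, sq]
  have hroot : √(sin θ * (((sin θ)⁻¹ - sin θ) / 2)) = cos θ / √2 := by
    have : sin θ * (((sin θ)⁻¹ - sin θ) / 2) = cos θ ^ 2 / 2 := by
      field_simp
      linarith
    rw [this, Real.sqrt_div (sq_nonneg _), Real.sqrt_sq hc.le]
  have h1 : 1 - sin θ ^ 2 = cos θ ^ 2 := by linarith
  rw [abs_neg, abs_of_pos (by positivity), H, Real.sinh_eq, he, he', he2, hroot, h1, smul_eq_mul]
  have h2 : √2 ^ 2 = (2 : ℝ) := Real.sq_sqrt (by norm_num)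
  field_simp
  rw [h2]
  ring

/-- `K_2 = ∫₀^∞ t² H(t) dt = 2√2 log 2`. -/
theorem K_two_eq : ∫ t in Ioi (0 : ℝ), t ^ 2 * H t = 2 * Real.sqrt 2 * Real.log 2 := by
  have hderiv : ∀ θ ∈ Ioo 0 (π / 2), HasDerivWithinAt (fun θ => -Real.log (sin θ))
      (-(cos θ / sin θ)) (Ioo 0 (π / 2)) θ := by
    intro θ hθ
    have hs : sin θ ≠ 0 := (sin_pos_of_pos_of_lt_pi hθ.1 (by linarith [hθ.2, pi_pos])).ne'
    exact ((hasDerivAt_sin θ).log hs).neg.hasDerivWithinAt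
  rw [← image_neg_log_sin,
    integral_image_eq_integral_abs_deriv_smul measurableSet_Ioo hderiv injOn_neg_log_sin,
    setIntegral_congr_fun measurableSet_Ioo (fun θ hθ => integrand_subst hθ),
    integral_const_mul, integral_log_sin_sq_div_cos_sq]
  field_simp
end

section
/- For every real p > 1/2, lim_{δ→0+} δ^{−1/2} ∫_0^∞ (δ + t)^p h_δ(t) dt = K_p, where h_δ(t) := 4 e^t sinh(δ) sinh(t) / (π sinh(δ+t) √((1 − e^{−2δ})(1 − e^{−2t})) (e^{2t} − 1)) and K_p := ∫_0^∞ t^p H(t) dt with H(t) := 4 e^{−t} √(e^{−t} sinh t) / (π (1 − e^{−2t})²). -/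
open Real MeasureTheory Set Filter

/-!
Since `e^{2t} - 1 = 2 e^t sinh t`, for `δ, t > 0`
`hDens δ t = (sinh δ / √(1 - e^{-2δ})) * (2 / π) / (sinh (δ + t) √(1 - e^{-2t}))`,
so the scaled moment is a prefactor depending on `δ` only times `∫ core p δ t dt`.

The prefactor `δ^{-1/2} sinh δ / √(1 - e^{-2δ})` is `(sinh δ / δ) / √((1 - e^{-2δ}) / δ)`, which
tends to `1 / √2` (`tendsto_prefactor`). The integral converges to `∫ core p 0 t dt` by dominated
convergence: the bound `1 - e^{-2x} ≥ (x / 2) e^{-x/2}` gives `1 / sinh x ≤ 4 e^{-x/2} / x`, hence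
`x^p / sinh x ≤ C x^{-a} e^{-3x/8}` with `a = max (1 - p) 0 < 1/2`. The right-hand side decreases
in `x`, so replacing `x = δ + t` by `t` yields the `δ`-free bound `core_le`, a constant multiple of
the Gamma integrand `t^{-a-1/2} e^{-t/8}`, which is integrable exactly because `a < 1/2`.
Finally `(1 / √2) * core p 0 t = t^p H(t)`.
-/

/-- `h_δ(t)`: the density of the first zero-crossing time of an Ornstein–Uhlenbeck process
started from a centered Gaussian initial condition with variance `(1 − e^{−2δ})/2`. -/
noncomputable def hDens (δ t : ℝ) : ℝ :=
  4 * Real.exp t * Real.sinh δ * Real.sinh t /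
    (π * Real.sinh (δ + t) *
      Real.sqrt ((1 - Real.exp (-2 * δ)) * (1 - Real.exp (-2 * t))) *
      (Real.exp (2 * t) - 1))

/-- `K_p = ∫₀^∞ t^p H(t) dt`. -/
noncomputable def K (p : ℝ) : ℝ := ∫ t in Ioi (0 : ℝ), t ^ p * H t

/-- The part of `(δ + t)^p * hDens δ t` that does not split off as a factor depending only
on `δ`. -/
noncomputable def core (p δ t : ℝ) : ℝ :=
  (δ + t) ^ p * (2 / π) / (Real.sinh (δ + t) * Real.sqrt (1 - Real.exp (-2 * t)))

lemma sinh_eq_exp_mul (t : ℝ) :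
    Real.sinh t = Real.exp t * (1 - Real.exp (-2 * t)) / 2 := by
  rw [Real.sinh_eq, mul_sub, ← Real.exp_add]
  ring_nf

lemma one_sub_exp_pos {t : ℝ} (ht : 0 < t) : 0 < 1 - Real.exp (-2 * t) := by
  have : Real.exp (-2 * t) < 1 := by
    rw [← Real.exp_zero]
    exact Real.exp_lt_exp.2 (by linarith)
  linarith

/-- This lower bound serves both the factor `sinh (δ + t)` and the square root in `core`. -/
lemma one_sub_exp_lower {x : ℝ} (hx : 0 < x) :
    x / 2 * Real.exp (-(x / 2)) ≤ 1 - Real.exp (-2 * x) := by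
  have e1 : Real.exp (-2 * x) ≤ Real.exp (-(x / 2)) * Real.exp (-(x / 2)) := by
    rw [← Real.exp_add]
    exact Real.exp_le_exp.2 (by linarith)
  have h1 := Real.add_one_le_exp (x / 2)
  have h2 : Real.exp (x / 2) * Real.exp (-(x / 2)) = 1 := by
    rw [← Real.exp_add]; simp
  have h3 := Real.exp_pos (-(x / 2))
  have h4 : Real.exp (-(x / 2)) < 1 := by
    rw [← Real.exp_zero]
    exact Real.exp_lt_exp.2 (by linarith)
  nlinarith

lemma inv_sinh_le {x : ℝ} (hx : 0 < x) :
    (Real.sinh x)⁻¹ ≤ 4 * x⁻¹ * Real.exp (-(x / 2)) := by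
  have h1 := one_sub_exp_lower hx
  have h2 : x / 4 * Real.exp (x / 2) ≤ Real.sinh x := by
    rw [sinh_eq_exp_mul]
    have e : Real.exp (x / 2) = Real.exp x * Real.exp (-(x / 2)) := by
      rw [← Real.exp_add]; ring_nf
    rw [e]
    nlinarith [Real.exp_pos x]
  calc (Real.sinh x)⁻¹ ≤ (x / 4 * Real.exp (x / 2))⁻¹ :=
        inv_anti₀ (by positivity) h2
    _ = 4 * x⁻¹ * Real.exp (-(x / 2)) := by
        rw [Real.exp_neg]; field_simp

lemma inv_sqrt_le {t : ℝ} (ht : 0 < t) :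
    (Real.sqrt (1 - Real.exp (-2 * t)))⁻¹ ≤
      Real.sqrt 2 * t ^ (-(1 / 2 : ℝ)) * Real.exp (t / 4) := by
  have h1 := one_sub_exp_lower ht
  calc (Real.sqrt (1 - Real.exp (-2 * t)))⁻¹
      ≤ (Real.sqrt (t / 2 * Real.exp (-(t / 2))))⁻¹ :=
        inv_anti₀ (by positivity) (Real.sqrt_le_sqrt h1)
    _ = Real.sqrt 2 * t ^ (-(1 / 2 : ℝ)) * Real.exp (t / 4) := by
        rw [Real.sqrt_mul (by positivity), Real.sqrt_div ht.le, Real.rpow_neg ht.le,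
          ← Real.sqrt_eq_rpow, ← Real.exp_half, mul_inv, ← Real.exp_neg]
        have : -(-(t / 2) / 2) = t / 4 := by ring
        rw [this]
        field_simp

lemma exists_rpow_le_exp {b : ℝ} (hb : 0 ≤ b) :
    ∃ C : ℝ, 0 < C ∧ ∀ x : ℝ, 0 < x → x ^ b ≤ C * Real.exp (x / 8) := by
  -- With `c = 8 (b + 1)`, `(x / c)^b ≤ (e^{x/c})^b ≤ e^{x/8}`.
  refine ⟨(8 * (b + 1)) ^ b, by positivity, fun x hx => ?_⟩
  have hc : 0 < 8 * (b + 1) := by positivity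
  have h1 : x / (8 * (b + 1)) ≤ Real.exp (x / (8 * (b + 1))) := by
    have := Real.add_one_le_exp (x / (8 * (b + 1)))
    linarith
  have h2 : (x / (8 * (b + 1))) ^ b ≤ Real.exp (x / 8) := by
    refine (Real.rpow_le_rpow (by positivity) h1 hb).trans ?_
    rw [← Real.exp_mul]
    apply Real.exp_le_exp.2
    rw [div_mul_eq_mul_div, div_le_div_iff₀ hc (by norm_num)]
    nlinarith
  calc x ^ b = (8 * (b + 1)) ^ b * (x / (8 * (b + 1))) ^ b := by
        rw [← Real.mul_rpow hc.le (by positivity)]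
        congr 1
        field_simp
    _ ≤ _ := by gcongr

/-- The exponent `max (1 - p) 0` makes the right-hand side antitone in `x` for `p < 1` and
`p ≥ 1` alike. -/
lemma exists_rpow_div_sinh_le (p : ℝ) :
    ∃ C : ℝ, 0 < C ∧ ∀ x : ℝ, 0 < x →
      x ^ p * (Real.sinh x)⁻¹ ≤ C * x ^ (-(max (1 - p) 0)) * Real.exp (-(3 * x / 8)) := by
  obtain ⟨C, hC, hb⟩ := exists_rpow_le_exp (le_max_right (p - 1) 0)
  refine ⟨4 * C, by positivity, fun x hx => ?_⟩
  have hsplit : p = -(max (1 - p) 0) + max (p - 1) 0 + 1 := by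
    rcases le_total p 1 with h | h
    · rw [max_eq_left (by linarith), max_eq_right (by linarith)]; ring
    · rw [max_eq_right (by linarith), max_eq_left (by linarith)]; ring
  have hpow : x ^ p = x ^ (-(max (1 - p) 0)) * x ^ (max (p - 1) 0) * x := by
    conv_lhs => rw [hsplit]
    rw [Real.rpow_add hx, Real.rpow_add hx, Real.rpow_one]
  calc x ^ p * (Real.sinh x)⁻¹ ≤ x ^ p * (4 * x⁻¹ * Real.exp (-(x / 2))) := by
        gcongr; exact inv_sinh_le hx
    _ = 4 * x ^ (-(max (1 - p) 0)) * x ^ (max (p - 1) 0) * Real.exp (-(x / 2)) := by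
        rw [hpow]; field_simp
    _ ≤ 4 * x ^ (-(max (1 - p) 0)) * (C * Real.exp (x / 8)) * Real.exp (-(x / 2)) := by
        gcongr; exact hb x hx
    _ = 4 * C * x ^ (-(max (1 - p) 0)) * (Real.exp (x / 8) * Real.exp (-(x / 2))) := by ring
    _ = _ := by
        rw [← Real.exp_add]; ring_nf

lemma core_le (p : ℝ) :
    ∃ C : ℝ, ∀ δ t : ℝ, 0 < δ → 0 < t →
      ‖core p δ t‖ ≤
        C * (t ^ ((1 / 2 - max (1 - p) 0) - 1) * Real.exp (-(1 / 8) * t)) := by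
  obtain ⟨C, hC, h⟩ := exists_rpow_div_sinh_le p
  refine ⟨C * (2 / π) * Real.sqrt 2, fun δ t hδ ht => ?_⟩
  have hx : 0 < δ + t := by linarith
  have hs : 0 < Real.sinh (δ + t) := Real.sinh_pos_iff.2 hx
  have hnn : 0 ≤ core p δ t := by unfold core; positivity
  have hmono : (δ + t) ^ p * (Real.sinh (δ + t))⁻¹ ≤
      C * t ^ (-(max (1 - p) 0)) * Real.exp (-(3 * t / 8)) := by
    have h1 : (δ + t) ^ (-(max (1 - p) 0)) ≤ t ^ (-(max (1 - p) 0)) :=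
      Real.rpow_le_rpow_of_nonpos ht (by linarith) (neg_nonpos.2 (le_max_right _ _))
    refine (h _ hx).trans ?_
    gcongr
    linarith
  rw [Real.norm_of_nonneg hnn]
  calc core p δ t
      = ((δ + t) ^ p * (Real.sinh (δ + t))⁻¹) * (2 / π)
          * (Real.sqrt (1 - Real.exp (-2 * t)))⁻¹ := by
        unfold core; rw [div_eq_mul_inv, mul_inv]; ring
    _ ≤ (C * t ^ (-(max (1 - p) 0)) * Real.exp (-(3 * t / 8))) * (2 / π)
          * (Real.sqrt 2 * t ^ (-(1 / 2 : ℝ)) * Real.exp (t / 4)) := by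
        gcongr ?_ * (2 / π) * ?_
        exact inv_sqrt_le ht
    _ = C * (2 / π) * Real.sqrt 2 * ((t ^ (-(max (1 - p) 0)) * t ^ (-(1 / 2 : ℝ)))
          * (Real.exp (-(3 * t / 8)) * Real.exp (t / 4))) := by ring
    _ = _ := by
        rw [← Real.rpow_add ht, ← Real.exp_add]; ring_nf

lemma integrableOn_bound {p : ℝ} (hp : 1 / 2 < p) :
    IntegrableOn
      (fun t : ℝ => t ^ ((1 / 2 - max (1 - p) 0) - 1) * Real.exp (-(1 / 8) * t)) (Ioi 0) := by
  have hm : max (1 - p) 0 < 1 / 2 := max_lt (by linarith) (by norm_num)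
  have := integrableOn_rpow_mul_exp_neg_mul_rpow (p := 1)
    (s := (1 / 2 - max (1 - p) 0) - 1) (b := 1 / 8) (by linarith) one_pos (by norm_num)
  simpa using this

lemma tendsto_integral_core {p : ℝ} (hp : 1 / 2 < p) :
    Tendsto (fun δ : ℝ => ∫ t in Ioi (0 : ℝ), core p δ t) (nhdsWithin 0 (Ioi 0))
      (nhds (∫ t in Ioi (0 : ℝ), core p 0 t)) := by
  obtain ⟨C, hC⟩ := core_le p
  refine tendsto_integral_filter_of_dominated_convergence
    (fun t => C * (t ^ ((1 / 2 - max (1 - p) 0) - 1) * Real.exp (-(1 / 8) * t))) ?_ ?_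
    ((integrableOn_bound hp).const_mul C) ?_
  · refine Eventually.of_forall fun δ => Measurable.aestronglyMeasurable ?_
    unfold core
    fun_prop
  · filter_upwards [self_mem_nhdsWithin] with δ hδ
    filter_upwards [ae_restrict_mem measurableSet_Ioi] with t ht
    exact hC δ t hδ ht
  · filter_upwards [ae_restrict_mem measurableSet_Ioi] with t ht
    have ht : 0 < t := ht
    have hc : ContinuousAt (fun δ => core p δ t) 0 := by
      unfold core
      have h1 : ContinuousAt (fun δ : ℝ => (δ + t) ^ p) 0 :=
        ContinuousAt.rpow_const (by fun_prop) (Or.inl (by simpa using ht.ne'))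
      refine ContinuousAt.div (h1.mul continuousAt_const) (by fun_prop) ?_
      have h2 : 0 < Real.sinh (0 + t) := Real.sinh_pos_iff.2 (by linarith)
      have h3 := Real.sqrt_pos.2 (one_sub_exp_pos ht)
      positivity
    exact hc.tendsto.mono_left nhdsWithin_le_nhds

lemma tendsto_prefactor :
    Tendsto (fun δ : ℝ =>
        δ ^ (-(1 : ℝ) / 2) * (Real.sinh δ / Real.sqrt (1 - Real.exp (-2 * δ))))
      (nhdsWithin 0 (Ioi 0)) (nhds (1 / Real.sqrt 2)) := by
  have hle : nhdsWithin (0 : ℝ) (Ioi 0) ≤ nhdsWithin 0 {0}ᶜ :=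
    nhdsWithin_mono _ fun x hx => ne_of_gt hx
  have h1 : Tendsto (fun δ : ℝ => δ⁻¹ * Real.sinh δ) (nhdsWithin 0 (Ioi 0)) (nhds 1) := by
    have := (hasDerivAt_iff_tendsto_slope_zero.1 (Real.hasDerivAt_sinh 0)).mono_left hle
    simpa using this
  have h2 : Tendsto (fun δ : ℝ => δ⁻¹ * (1 - Real.exp (-2 * δ)))
      (nhdsWithin 0 (Ioi 0)) (nhds 2) := by
    have hd : HasDerivAt (fun δ : ℝ => 1 - Real.exp (-2 * δ)) 2 0 := by
      have := (((hasDerivAt_id (0 : ℝ)).const_mul (-2)).exp).const_sub 1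
      simpa using this
    have := (hasDerivAt_iff_tendsto_slope_zero.1 hd).mono_left hle
    simpa using this
  refine (h1.div h2.sqrt (by positivity)).congr' ?_
  filter_upwards [self_mem_nhdsWithin] with δ hδ
  have hδ : 0 < δ := hδ
  have hu := Real.sqrt_pos.2 (one_sub_exp_pos hδ)
  have hs := Real.sqrt_pos.2 hδ
  simp only [Pi.div_apply]
  rw [neg_div, Real.rpow_neg hδ.le, ← Real.sqrt_eq_rpow, Real.sqrt_mul (by positivity),
    Real.sqrt_inv]
  field_simp
  rw [Real.sq_sqrt hδ.le]

lemma rpow_mul_hDens_eq (p : ℝ) {δ t : ℝ} (hδ : 0 < δ) (ht : 0 < t) :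
    (δ + t) ^ p * hDens δ t =
      Real.sinh δ / Real.sqrt (1 - Real.exp (-2 * δ)) * core p δ t := by
  have hu := Real.sqrt_pos.2 (one_sub_exp_pos hδ)
  have hv := Real.sqrt_pos.2 (one_sub_exp_pos ht)
  have hs : 0 < Real.sinh (δ + t) := Real.sinh_pos_iff.2 (by linarith)
  have hst : 0 < Real.sinh t := Real.sinh_pos_iff.2 ht
  have he : Real.exp (2 * t) - 1 = 2 * Real.exp t * Real.sinh t := by
    have e1 : Real.exp t * Real.exp (-t) = 1 := by rw [← Real.exp_add]; simp
    have e2 : Real.exp (2 * t) = Real.exp t * Real.exp t := by rw [← Real.exp_add]; ring_nf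
    rw [Real.sinh_eq, e2]
    linear_combination e1
  unfold hDens core
  rw [he, Real.sqrt_mul (one_sub_exp_pos hδ).le]
  field_simp
  ring

lemma rpow_mul_H_eq (p : ℝ) {t : ℝ} (ht : 0 < t) :
    1 / Real.sqrt 2 * core p 0 t = t ^ p * H t := by
  have hw := one_sub_exp_pos ht
  have hv := Real.sqrt_pos.2 hw
  have e1 : Real.exp (-t) * Real.sinh t = (1 - Real.exp (-2 * t)) / 2 := by
    rw [sinh_eq_exp_mul, Real.exp_neg]; field_simp
  have hsq := Real.sq_sqrt hw.le
  unfold core H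
  rw [e1, Real.sqrt_div hw.le, zero_add, sinh_eq_exp_mul, Real.exp_neg]
  set w := 1 - Real.exp (-2 * t) with hwdef
  field_simp
  rw [hsq]
  ring

/-- For `p > 1/2`, `δ^{−1/2} E[(τ_δ)^p] = δ^{−1/2} ∫₀^∞ (δ + t)^p h_δ(t) dt → K_p`
as `δ → 0+`. -/
theorem moment_of_tau_delta_tendsto (p : ℝ) (hp : 1 / 2 < p) :
    Tendsto
      (fun δ : ℝ => δ ^ (-(1 : ℝ) / 2) * ∫ t in Ioi (0 : ℝ), (δ + t) ^ p * hDens δ t)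
      (nhdsWithin 0 (Ioi 0)) (nhds (K p)) := by
  have hK : K p = 1 / Real.sqrt 2 * ∫ t in Ioi (0 : ℝ), core p 0 t := by
    rw [K, ← integral_const_mul]
    exact setIntegral_congr_fun measurableSet_Ioi fun t ht => (rpow_mul_H_eq p ht).symm
  rw [hK]
  refine (tendsto_prefactor.mul (tendsto_integral_core hp)).congr' ?_
  filter_upwards [self_mem_nhdsWithin] with δ hδ
  rw [mul_assoc, ← integral_const_mul]
  congr 1
  exact setIntegral_congr_fun measurableSet_Ioi fun t ht => (rpow_mul_hDens_eq p hδ ht).symm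
end
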